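/- arXiv:1310.1688 — 3 statements merged into one kernel-verified Lean document; each statement's English description precedes it below -/
import Mathlib

section
/- Let γ : ℝ × ℝ → ℝ² be a smooth map, 2π-periodic in s, with det(γ, γ_s) = 1 for all (s,t), and let κ be defined by γ_ss = -κ γ. If γ_t = -(1/2) κ_s γ + κ γ_s, then κ satisfies the Korteweg–de Vries equation κ_t = (1/2) κ_sss + 3 κ κ_s. -/
/-- Partial derivative in the first (space) variable. -/
noncomputable def pderivS {E : Type*} [NormedAddCommGroup E] [NormedSpace ℝ E]
    (f : ℝ → ℝ → E) (s t : ℝ) : E := deriv (fun u => f u t) s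

/-- Partial derivative in the second (time) variable. -/
noncomputable def pderivT {E : Type*} [NormedAddCommGroup E] [NormedSpace ℝ E]
    (f : ℝ → ℝ → E) (s t : ℝ) : E := deriv (fun u => f s u) t

/-! The KdV equation is the compatibility condition of the two linear equations `γ_ss = -κ γ` and
`γ_t = -(1/2) κ_s γ + κ γ_s`. In the moving frame `(γ, γ_s)`, the operator `∂_s` takes the vector
with coefficients `(a, b)` to the one with coefficients `(a_s - κ b, a + b_s)`. Computing `γ_sst`
once as `∂_t (-κ γ)` and once as `∂_s ∂_s γ_t`, one finds the same coefficient of `γ_s`; since `γ`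
does not vanish, the coefficients of `γ` agree as well. -/

open Function

section DivisionByVector

variable {𝕜 X F : Type*} [NontriviallyNormedField 𝕜] [NormedAddCommGroup X] [NormedSpace 𝕜 X]
  [NormedAddCommGroup F] [NormedSpace 𝕜 F] [SeparatingDual 𝕜 F] {n : WithTop ℕ∞}

theorem contDiffAt_of_smul_right {a : X → 𝕜} {f : X → F} {x : X} (hf : ContDiffAt 𝕜 n f x)
    (hfx : f x ≠ 0) (haf : ContDiffAt 𝕜 n (fun y => a y • f y) x) : ContDiffAt 𝕜 n a x := by
  obtain ⟨φ, hφ⟩ := SeparatingDual.exists_ne_zero (R := 𝕜) hfx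
  have hφf : ContDiffAt 𝕜 n (fun y => φ (f y)) x := φ.contDiff.contDiffAt.comp x hf
  have hφaf : ContDiffAt 𝕜 n (fun y => φ (a y • f y)) x := φ.contDiff.contDiffAt.comp x haf
  refine (hφaf.div hφf hφ).congr_of_eventuallyEq ?_
  filter_upwards [hφf.continuousAt.eventually_ne hφ] with y hy
  rw [Pi.div_apply, map_smul, smul_eq_mul, mul_div_cancel_right₀ _ hy]

end DivisionByVector

section PartialDerivatives

variable {E : Type*} [NormedAddCommGroup E] [NormedSpace ℝ E] {f : ℝ → ℝ → E} {s t : ℝ}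

theorem hasDerivAt_slice_fst (hf : DifferentiableAt ℝ (uncurry f) (s, t)) :
    HasDerivAt (fun u => f u t) (fderiv ℝ (uncurry f) (s, t) (1, 0)) s :=
  hf.hasFDerivAt.comp_hasDerivAt (f := fun u => (u, t)) s
    ((hasDerivAt_id s).prodMk (hasDerivAt_const s t))

theorem hasDerivAt_slice_snd (hf : DifferentiableAt ℝ (uncurry f) (s, t)) :
    HasDerivAt (fun u => f s u) (fderiv ℝ (uncurry f) (s, t) (0, 1)) t :=
  hf.hasFDerivAt.comp_hasDerivAt (f := fun u => (s, u)) t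
    ((hasDerivAt_const t s).prodMk (hasDerivAt_id t))

theorem pderivS_eq_fderiv (hf : DifferentiableAt ℝ (uncurry f) (s, t)) :
    pderivS f s t = fderiv ℝ (uncurry f) (s, t) (1, 0) :=
  (hasDerivAt_slice_fst hf).deriv

theorem pderivT_eq_fderiv (hf : DifferentiableAt ℝ (uncurry f) (s, t)) :
    pderivT f s t = fderiv ℝ (uncurry f) (s, t) (0, 1) :=
  (hasDerivAt_slice_snd hf).deriv

theorem hasDerivAt_pderivS (hf : DifferentiableAt ℝ (uncurry f) (s, t)) :
    HasDerivAt (fun u => f u t) (pderivS f s t) s :=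
  (hasDerivAt_slice_fst hf).differentiableAt.hasDerivAt

theorem hasDerivAt_pderivT (hf : DifferentiableAt ℝ (uncurry f) (s, t)) :
    HasDerivAt (fun u => f s u) (pderivT f s t) t :=
  (hasDerivAt_slice_snd hf).differentiableAt.hasDerivAt

theorem contDiff_pderivS {m n : WithTop ℕ∞} (hf : ContDiff ℝ n (uncurry f)) (hmn : m + 1 ≤ n) :
    ContDiff ℝ m (uncurry (pderivS f)) := by
  have hdiff : Differentiable ℝ (uncurry f) :=
    (hf.of_le (le_add_self.trans hmn)).differentiable one_ne_zero
  have heq : uncurry (pderivS f) = fun p => fderiv ℝ (uncurry f) p (1, 0) :=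
    funext fun p => pderivS_eq_fderiv (hdiff p)
  rw [heq]
  exact (hf.fderiv_right hmn).clm_apply contDiff_const

theorem pderivT_pderivS_comm (hf : ContDiff ℝ 2 (uncurry f)) :
    pderivT (pderivS f) = pderivS (pderivT f) := by
  have hdiff : Differentiable ℝ (uncurry f) := hf.differentiable two_ne_zero
  have hS : pderivS f = fun s t => fderiv ℝ (uncurry f) (s, t) (1, 0) :=
    funext₂ fun s t => pderivS_eq_fderiv (hdiff (s, t))
  have hT : pderivT f = fun s t => fderiv ℝ (uncurry f) (s, t) (0, 1) :=
    funext₂ fun s t => pderivT_eq_fderiv (hdiff (s, t))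
  have hdiff' : Differentiable ℝ (fderiv ℝ (uncurry f)) :=
    (hf.fderiv_right (m := 1) one_add_one_eq_two.le).differentiable one_ne_zero
  funext s t
  have hsymm : IsSymmSndFDerivAt ℝ (uncurry f) (s, t) :=
    hf.contDiffAt.isSymmSndFDerivAt minSmoothness_of_isRCLikeNormedField.le
  calc pderivT (pderivS f) s t
      = fderiv ℝ (fderiv ℝ (uncurry f)) (s, t) (0, 1) (1, 0) := by
        rw [hS]
        exact ((ContinuousLinearMap.apply ℝ E (1, 0)).hasFDerivAt.comp_hasDerivAt t
          (hasDerivAt_slice_snd (f := fun s t => fderiv ℝ (uncurry f) (s, t))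
            (hdiff' (s, t)))).deriv
    _ = fderiv ℝ (fderiv ℝ (uncurry f)) (s, t) (1, 0) (0, 1) := hsymm (0, 1) (1, 0)
    _ = pderivS (pderivT f) s t := by
        rw [hT]
        exact ((ContinuousLinearMap.apply ℝ E (0, 1)).hasFDerivAt.comp_hasDerivAt s
          (hasDerivAt_slice_fst (f := fun s t => fderiv ℝ (uncurry f) (s, t))
            (hdiff' (s, t)))).deriv.symm

end PartialDerivatives

section Flow

variable {E : Type*} [NormedAddCommGroup E] [NormedSpace ℝ E]

theorem pderivS_smul_add_smul {γ : ℝ → ℝ → E} {κ a b : ℝ → ℝ → ℝ} {s t a' b' : ℝ}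
    (hγ : DifferentiableAt ℝ (uncurry γ) (s, t))
    (hγs : DifferentiableAt ℝ (uncurry (pderivS γ)) (s, t))
    (hκ : pderivS (pderivS γ) s t = (-κ s t) • γ s t)
    (ha : HasDerivAt (fun u => a u t) a' s) (hb : HasDerivAt (fun u => b u t) b' s) :
    pderivS (fun s t => a s t • γ s t + b s t • pderivS γ s t) s t =
      (a' - κ s t * b s t) • γ s t + (a s t + b') • pderivS γ s t := by
  have hderiv := (ha.fun_smul (hasDerivAt_pderivS hγ)).fun_add
    (hb.fun_smul (hasDerivAt_pderivS hγs))
  rw [pderivS, hderiv.deriv, hκ]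
  module

theorem contDiff_curvature {m n : WithTop ℕ∞} {γ : ℝ → ℝ → E} {κ : ℝ → ℝ → ℝ}
    (hγ : ContDiff ℝ n (uncurry γ)) (hmn : m + 2 ≤ n) (hγ0 : ∀ s t, γ s t ≠ 0)
    (hκ : ∀ s t, pderivS (pderivS γ) s t = (-κ s t) • γ s t) :
    ContDiff ℝ m (uncurry κ) := by
  have hγss : ContDiff ℝ m (uncurry (pderivS (pderivS γ))) :=
    contDiff_pderivS (contDiff_pderivS hγ (m := m + 1) (by rwa [add_assoc, one_add_one_eq_two]))
      le_rfl
  have hκγ : ContDiff ℝ m fun p => uncurry κ p • uncurry γ p := by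
    have heq : (fun p => uncurry κ p • uncurry γ p) = -uncurry (pderivS (pderivS γ)) :=
      funext fun p => by simp only [uncurry, Pi.neg_apply, hκ, neg_smul, neg_neg]
    exact heq ▸ hγss.neg
  exact contDiff_iff_contDiffAt.2 fun p => contDiffAt_of_smul_right
    (hγ.of_le (le_self_add.trans hmn)).contDiffAt (hγ0 p.1 p.2) hκγ.contDiffAt

theorem pderivT_pderivS_pderivS_of_curvature {γ : ℝ → ℝ → E} {κ : ℝ → ℝ → ℝ} {s t : ℝ}
    (hγ : DifferentiableAt ℝ (uncurry γ) (s, t)) (hκdiff : DifferentiableAt ℝ (uncurry κ) (s, t))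
    (hκ : ∀ s t, pderivS (pderivS γ) s t = (-κ s t) • γ s t) :
    pderivT (pderivS (pderivS γ)) s t = -(pderivT κ s t • γ s t + κ s t • pderivT γ s t) := by
  have hderiv := (hasDerivAt_pderivT hκdiff).fun_neg.fun_smul (hasDerivAt_pderivT hγ)
  rw [funext₂ hκ, pderivT, hderiv.deriv]
  module

theorem pderivS_pderivS_pderivT_of_motion {γ : ℝ → ℝ → E} {κ b : ℝ → ℝ → ℝ}
    (hγ : Differentiable ℝ (uncurry γ)) (hγs : Differentiable ℝ (uncurry (pderivS γ)))
    (hκ : ∀ s t, pderivS (pderivS γ) s t = (-κ s t) • γ s t)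
    (hκdiff : Differentiable ℝ (uncurry κ)) (hb : ContDiff ℝ 3 (uncurry b))
    (hmotion : ∀ s t, pderivT γ s t =
      (-(1 / 2) * pderivS b s t) • γ s t + b s t • pderivS γ s t) (s t : ℝ) :
    pderivS (pderivS (pderivT γ)) s t =
      (-(1 / 2) * pderivS (pderivS (pderivS b)) s t - (3 / 2) * κ s t * pderivS b s t -
        pderivS κ s t * b s t) • γ s t + (-κ s t * b s t) • pderivS γ s t := by
  have hbs : ContDiff ℝ 2 (uncurry (pderivS b)) := contDiff_pderivS hb (by norm_num)
  have hbss : ContDiff ℝ 1 (uncurry (pderivS (pderivS b))) := contDiff_pderivS hbs (by norm_num)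
  have db (s t : ℝ) := hasDerivAt_pderivS (hb.differentiable three_ne_zero (s, t))
  have dbs (s t : ℝ) := hasDerivAt_pderivS (hbs.differentiable two_ne_zero (s, t))
  have dbss := hasDerivAt_pderivS (hbss.differentiable one_ne_zero (s, t))
  have hγts : pderivS (pderivT γ) = fun s t =>
      (-(1 / 2) * pderivS (pderivS b) s t - κ s t * b s t) • γ s t +
        ((1 / 2) * pderivS b s t) • pderivS γ s t := by
    funext s t
    rw [funext₂ hmotion, pderivS_smul_add_smul (hγ (s, t)) (hγs (s, t)) (hκ s t)
      ((dbs s t).const_mul _) (db s t)]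
    module
  have hcoeff : HasDerivAt (fun u => -(1 / 2) * pderivS (pderivS b) u t - κ u t * b u t)
      (-(1 / 2) * pderivS (pderivS (pderivS b)) s t -
        (pderivS κ s t * b s t + κ s t * pderivS b s t)) s :=
    (dbss.const_mul _).fun_sub ((hasDerivAt_pderivS (hκdiff (s, t))).fun_mul (db s t))
  rw [hγts, pderivS_smul_add_smul (hγ (s, t)) (hγs (s, t)) (hκ s t) hcoeff
    ((dbs s t).const_mul _)]
  module

/-- The coefficient `-(1/2) b_s` is the one for which a motion in the plane with tangential speed
`b` preserves `det(γ, γ_s)`. -/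
theorem pderivT_curvature_of_motion {γ : ℝ → ℝ → E} {κ b : ℝ → ℝ → ℝ}
    (hγ : ContDiff ℝ 3 (uncurry γ)) (hγ0 : ∀ s t, γ s t ≠ 0)
    (hκ : ∀ s t, pderivS (pderivS γ) s t = (-κ s t) • γ s t)
    (hb : ContDiff ℝ 3 (uncurry b))
    (hmotion : ∀ s t, pderivT γ s t =
      (-(1 / 2) * pderivS b s t) • γ s t + b s t • pderivS γ s t) (s t : ℝ) :
    pderivT κ s t = (1 / 2) * pderivS (pderivS (pderivS b)) s t +
      2 * κ s t * pderivS b s t + pderivS κ s t * b s t := by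
  have hγs : ContDiff ℝ 2 (uncurry (pderivS γ)) := contDiff_pderivS hγ (by norm_num)
  have hγdiff : Differentiable ℝ (uncurry γ) := hγ.differentiable three_ne_zero
  have hκdiff : Differentiable ℝ (uncurry κ) :=
    (contDiff_curvature (m := 1) hγ (by norm_num) hγ0 hκ).differentiable one_ne_zero
  have hcompat : pderivT (pderivS (pderivS γ)) s t = pderivS (pderivS (pderivT γ)) s t := by
    rw [pderivT_pderivS_comm hγs, pderivT_pderivS_comm (hγ.of_le (by norm_num))]
  rw [pderivT_pderivS_pderivS_of_curvature (hγdiff (s, t)) (hκdiff (s, t)) hκ, hmotion,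
    pderivS_pderivS_pderivT_of_motion hγdiff (hγs.differentiable two_ne_zero) hκ hκdiff hb
      hmotion] at hcompat
  have hγcoeff : (pderivT κ s t - ((1 / 2) * pderivS (pderivS (pderivS b)) s t +
      2 * κ s t * pderivS b s t + pderivS κ s t * b s t)) • γ s t = 0 := by
    linear_combination (norm := module) -hcompat
  exact sub_eq_zero.1 ((smul_eq_zero_iff_left (hγ0 s t)).1 hγcoeff)

theorem equicentroaffine_KdV_flow_general {γ : ℝ → ℝ → E} {κ : ℝ → ℝ → ℝ}
    (hγ : ContDiff ℝ 5 (uncurry γ)) (hγ0 : ∀ s t, γ s t ≠ 0)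
    (hκ : ∀ s t, pderivS (pderivS γ) s t = (-κ s t) • γ s t)
    (hmotion : ∀ s t, pderivT γ s t =
      (-(1 / 2) * pderivS κ s t) • γ s t + κ s t • pderivS γ s t) (s t : ℝ) :
    pderivT κ s t =
      (1 / 2) * pderivS (pderivS (pderivS κ)) s t + 3 * κ s t * pderivS κ s t := by
  have hκ3 : ContDiff ℝ 3 (uncurry κ) := contDiff_curvature hγ (by norm_num) hγ0 hκ
  linear_combination pderivT_curvature_of_motion (hγ.of_le (by norm_num)) hγ0 hκ hκ3 hmotion s t

end Flow

/-- under the motion `γ_t = -(1/2) κ_s γ + κ γ_s` of closed equicentroaffine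
plane curves, the equicentroaffine curvature satisfies the KdV equation
`κ_t = (1/2) κ_sss + 3 κ κ_s`. -/
theorem equicentroaffine_KdV_flow
    (γ : ℝ → ℝ → ℝ × ℝ) (κ : ℝ → ℝ → ℝ)
    (hγ : ContDiff ℝ (⊤ : ℕ∞) (fun p : ℝ × ℝ => γ p.1 p.2))
    (hγper : ∀ s t, γ (s + 2 * Real.pi) t = γ s t)
    (hdet : ∀ s t, (γ s t).1 * (pderivS γ s t).2 - (γ s t).2 * (pderivS γ s t).1 = 1)
    (hκ : ∀ s t, pderivS (pderivS γ) s t = (-κ s t) • γ s t)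
    (hmotion : ∀ s t, pderivT γ s t =
      (-(1 / 2) * pderivS κ s t) • γ s t + κ s t • pderivS γ s t) :
    ∀ s t, pderivT κ s t =
      (1 / 2) * pderivS (pderivS (pderivS κ)) s t + 3 * κ s t * pderivS κ s t := by
  have hγ0 : ∀ s t, γ s t ≠ 0 := fun s t h => by simpa [h] using hdet s t
  exact equicentroaffine_KdV_flow_general (mod_cast contDiff_infty.1 hγ 5) hγ0 hκ hmotion
end

section
/- Let γ : ℝ → ℝ² be a smooth 2π-periodic curve with det(γ, γ_s) = 1 and equicentroaffine curvature κ defined by γ_ss = -κ γ. For smooth 2π-periodic α, β : ℝ → ℝ, set X = -(1/2) α_s γ + α γ_s and Y = -(1/2) β_s γ + β γ_s. Then ∫₀^{2π} det(X, Y_ss + κ Y) ds = ∫₀^{2π} α ((1/2) β_sss + 2 κ β_s + κ_s β) ds. -/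
/-!
In the moving frame `(γ, γ_s)`, where `γ_ss = -κ γ`, two differentiations of
`Y = -(1/2) β_s γ + β γ_s` leave `Y_ss + κ Y` with no `γ_s`-component: it equals `-(Ω β_s) γ`.
As `det(γ, γ) = 0` and `det(γ, γ_s) = 1`, pairing with `X` picks out the `γ_s`-coefficient `α`
of `X`, so the two integrands agree pointwise.
-/

/-- The standard area form `det(u, v)` on the plane. -/
def planeDet (u v : ℝ × ℝ) : ℝ := u.1 * v.2 - u.2 * v.1

/-- `Ω β_s` for the KdV recursion operator `Ω = (1/2) D_s² + 2 κ + κ_s D_s⁻¹`. The argument is `β`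
instead of `β_s`, which makes the choice `D_s⁻¹ β_s = β`. -/
noncomputable def kdvRecursion (κ β : ℝ → ℝ) (s : ℝ) : ℝ :=
  (1 / 2) * deriv (deriv (deriv β)) s + 2 * κ s * deriv β s + deriv κ s * β s

/-- The tangent vector `-(1/2) β_s γ + β γ_s` at `γ` to the space of curves with
`det(γ, γ_s) = 1`. The `γ`-coefficient is the one that preserves this normalization. -/
noncomputable def equicentroaffineVariation {E : Type*} [NormedAddCommGroup E] [NormedSpace ℝ E]
    (γ : ℝ → E) (β : ℝ → ℝ) (s : ℝ) : E :=
  (-(1 / 2) * deriv β s) • γ s + β s • deriv γ s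

theorem planeDet_smul_add_smul_smul (a b c : ℝ) (u v : ℝ × ℝ) :
    planeDet (a • u + b • v) (c • u) = -(b * c) * planeDet u v := by
  simp only [planeDet, Prod.fst_add, Prod.snd_add, Prod.smul_fst, Prod.smul_snd, smul_eq_mul]
  ring

theorem left_ne_zero_of_planeDet_ne_zero {u v : ℝ × ℝ} (h : planeDet u v ≠ 0) : u ≠ 0 := by
  rintro rfl
  simp [planeDet] at h

theorem differentiableAt_of_smul_of_ne_zero {𝕜 E F : Type*} [NontriviallyNormedField 𝕜]
    [NormedAddCommGroup E] [NormedSpace 𝕜 E] [SeparatingDual 𝕜 E]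
    [NormedAddCommGroup F] [NormedSpace 𝕜 F] {c : F → 𝕜} {v : F → E} {x : F}
    (hcv : DifferentiableAt 𝕜 (fun t => c t • v t) x) (hv : DifferentiableAt 𝕜 v x)
    (hne : v x ≠ 0) : DifferentiableAt 𝕜 c x := by
  obtain ⟨f, hf⟩ := SeparatingDual.exists_ne_zero (R := 𝕜) hne
  have hfv : DifferentiableAt 𝕜 (fun t => f (v t)) x := f.differentiableAt.comp x hv
  have hfcv : DifferentiableAt 𝕜 (fun t => f (c t • v t)) x := f.differentiableAt.comp x hcv
  refine (hfcv.mul (hfv.inv hf)).congr_of_eventuallyEq ?_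
  filter_upwards [hfv.continuousAt.eventually_ne hf] with t ht
  simp [ht]

section MovingFrame

variable {E : Type*} [NormedAddCommGroup E] [NormedSpace ℝ E] {γ : ℝ → E} {κ : ℝ → ℝ}

theorem differentiableAt_curvature {s : ℝ} (hγ : DifferentiableAt ℝ γ s)
    (hγ'' : DifferentiableAt ℝ (deriv (deriv γ)) s)
    (hκ : ∀ t, deriv (deriv γ) t = (-κ t) • γ t) (hne : γ s ≠ 0) : DifferentiableAt ℝ κ s := by
  have hκγ : DifferentiableAt ℝ (fun t => (-κ t) • γ t) s := funext hκ ▸ hγ''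
  simpa using (differentiableAt_of_smul_of_ne_zero hκγ hγ hne).neg

theorem deriv_smul_add_smul_deriv {a b : ℝ → ℝ} {s : ℝ}
    (hγ : DifferentiableAt ℝ γ s) (hγ' : DifferentiableAt ℝ (deriv γ) s)
    (hκ : deriv (deriv γ) s = (-κ s) • γ s)
    (ha : DifferentiableAt ℝ a s) (hb : DifferentiableAt ℝ b s) :
    deriv (fun t => a t • γ t + b t • deriv γ t) s
      = (deriv a s - κ s * b s) • γ s + (a s + deriv b s) • deriv γ s := by
  refine ((ha.hasDerivAt.smul hγ.hasDerivAt).add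
    (hb.hasDerivAt.smul hγ'.hasDerivAt)).deriv.trans ?_
  rw [hκ]
  module

theorem deriv_equicentroaffineVariation {β : ℝ → ℝ} {s : ℝ}
    (hγ : DifferentiableAt ℝ γ s) (hγ' : DifferentiableAt ℝ (deriv γ) s)
    (hκ : deriv (deriv γ) s = (-κ s) • γ s)
    (hβ : DifferentiableAt ℝ β s) (hβ' : DifferentiableAt ℝ (deriv β) s) :
    deriv (equicentroaffineVariation γ β) s
      = (-(1 / 2) * deriv (deriv β) s - κ s * β s) • γ s + ((1 / 2) * deriv β s) • deriv γ s := by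
  refine (deriv_smul_add_smul_deriv hγ hγ' hκ (hβ'.const_mul _) hβ).trans ?_
  rw [deriv_const_mul _ hβ']
  module

theorem deriv_deriv_equicentroaffineVariation_add_smul {β : ℝ → ℝ} {s : ℝ}
    (hγ : Differentiable ℝ γ) (hγ' : Differentiable ℝ (deriv γ))
    (hκ : ∀ t, deriv (deriv γ) t = (-κ t) • γ t) (hκ' : DifferentiableAt ℝ κ s)
    (hβ : ContDiff ℝ 3 β) :
    deriv (deriv (equicentroaffineVariation γ β)) s + κ s • equicentroaffineVariation γ β s
      = (-kdvRecursion κ β s) • γ s := by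
  have hβ₀ : Differentiable ℝ β := hβ.differentiable three_ne_zero
  have hβ₁ : Differentiable ℝ (deriv β) := hβ.deriv'.differentiable two_ne_zero
  have hβ₂ : Differentiable ℝ (deriv (deriv β)) := hβ.deriv'.deriv'.differentiable one_ne_zero
  have hY' : deriv (equicentroaffineVariation γ β) = fun t =>
      (-(1 / 2) * deriv (deriv β) t - κ t * β t) • γ t + ((1 / 2) * deriv β t) • deriv γ t :=
    funext fun t => deriv_equicentroaffineVariation (hγ t) (hγ' t) (hκ t) (hβ₀ t) (hβ₁ t)
  have hcoeff : deriv (fun t => -(1 / 2) * deriv (deriv β) t - κ t * β t) s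
      = -(1 / 2) * deriv (deriv (deriv β)) s - (deriv κ s * β s + κ s * deriv β s) :=
    (((hβ₂ s).hasDerivAt.const_mul _).sub (hκ'.hasDerivAt.mul (hβ₀ s).hasDerivAt)).deriv
  rw [hY', deriv_smul_add_smul_deriv (hγ s) (hγ' s) (hκ s) (by fun_prop) (by fun_prop),
    deriv_const_mul _ (hβ₁ s), hcoeff, equicentroaffineVariation, kdvRecursion]
  module

end MovingFrame

theorem omega1_formula_general {γ : ℝ → ℝ × ℝ} {κ β : ℝ → ℝ}
    (hγ : ContDiff ℝ 3 γ) (hβ : ContDiff ℝ 3 β)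
    (hdet : ∀ s, planeDet (γ s) (deriv γ s) = 1)
    (hκ : ∀ s, deriv (deriv γ) s = (-κ s) • γ s) (a b s : ℝ) :
    planeDet (a • γ s + b • deriv γ s)
        (deriv (deriv (equicentroaffineVariation γ β)) s + κ s • equicentroaffineVariation γ β s)
      = b * kdvRecursion κ β s := by
  have hne : γ s ≠ 0 := left_ne_zero_of_planeDet_ne_zero (hdet s ▸ one_ne_zero)
  have hγ₀ : Differentiable ℝ γ := hγ.differentiable three_ne_zero
  have hγ₁ : Differentiable ℝ (deriv γ) := hγ.deriv'.differentiable two_ne_zero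
  have hγ₂ : Differentiable ℝ (deriv (deriv γ)) := hγ.deriv'.deriv'.differentiable one_ne_zero
  have hκ' : DifferentiableAt ℝ κ s := differentiableAt_curvature (hγ₀ s) (hγ₂ s) hκ hne
  rw [deriv_deriv_equicentroaffineVariation_add_smul hγ₀ hγ₁ hκ hκ' hβ,
    planeDet_smul_add_smul_smul, hdet s]
  ring

/-- for tangent vectors `X = -(1/2) α_s γ + α γ_s` and
`Y = -(1/2) β_s γ + β γ_s` to the space of closed equicentroaffine plane curves,
`∫₀^{2π} det(X, Y_ss + κ Y) ds = ∫₀^{2π} α ((1/2) β_sss + 2 κ β_s + κ_s β) ds`. -/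
theorem omega1_formula
    (γ : ℝ → ℝ × ℝ) (κ α β : ℝ → ℝ) (X Y : ℝ → ℝ × ℝ)
    (hγ : ContDiff ℝ (⊤ : ℕ∞) γ)
    (hα : ContDiff ℝ (⊤ : ℕ∞) α)
    (hβ : ContDiff ℝ (⊤ : ℕ∞) β)
    (hγper : ∀ s, γ (s + 2 * Real.pi) = γ s)
    (hαper : ∀ s, α (s + 2 * Real.pi) = α s)
    (hβper : ∀ s, β (s + 2 * Real.pi) = β s)
    (hdet : ∀ s, (γ s).1 * (deriv γ s).2 - (γ s).2 * (deriv γ s).1 = 1)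
    (hκ : ∀ s, deriv (deriv γ) s = (-κ s) • γ s)
    (hX : ∀ s, X s = (-(1 / 2) * deriv α s) • γ s + α s • deriv γ s)
    (hY : ∀ s, Y s = (-(1 / 2) * deriv β s) • γ s + β s • deriv γ s) :
    ∫ s in (0 : ℝ)..(2 * Real.pi),
        ((X s).1 * (deriv (deriv Y) s + κ s • Y s).2
          - (X s).2 * (deriv (deriv Y) s + κ s • Y s).1)
      = ∫ s in (0 : ℝ)..(2 * Real.pi),
          α s * ((1 / 2) * deriv (deriv (deriv β)) s
            + 2 * κ s * deriv β s + deriv κ s * β s) := by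
  obtain rfl : Y = equicentroaffineVariation γ β := funext hY
  exact intervalIntegral.integral_congr fun s _ => hX s ▸
    omega1_formula_general (contDiff_infty.1 hγ 3) (contDiff_infty.1 hβ 3) hdet hκ _ _ s
end

section
/- Let α, β, κ : ℝ → ℝ be smooth 2π-periodic functions, and suppose g : ℝ → ℝ is a smooth 2π-periodic function with g_s = (1/2) α_sss + 2 κ α_s + κ_s α. Then ∫₀^{2π} g β_s ds = ∫₀^{2π} α ((1/2) β_sss + 2 κ β_s + κ_s β) ds. -/
/-!
The operator `E = (1/2) D³ + 2 κ D + κ_s` is formally skew-adjoint: by the Lagrange identity,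
`E u · v + u · E v` is the derivative of an expression in `u`, `v`, `κ` and their derivatives,
which has the same value at both ends of a period. If `g_s = E α`, integrating by parts once
moves the derivative from `β` to `g`, and skew-adjointness then moves `E` from `α` to `β`;
the two minus signs cancel.
-/

open Function MeasureTheory

theorem periodic_deriv {𝕜 F : Type*} [NontriviallyNormedField 𝕜] [NormedAddCommGroup F]
    [NormedSpace 𝕜 F] {f : 𝕜 → F} {c : 𝕜} (hf : Periodic f c) : Periodic (deriv f) c := fun s ↦ by
  rw [← deriv_comp_add_const f c s, show (fun x ↦ f (x + c)) = f from funext hf]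

section PeriodicIntegration

variable {a c : ℝ}

theorem integral_eq_zero_of_hasDerivAt_of_periodic {F : Type*} [NormedAddCommGroup F]
    [NormedSpace ℝ F] [CompleteSpace F] {f f' : ℝ → F} (hf : ∀ s, HasDerivAt f (f' s) s)
    (hf' : IntervalIntegrable f' volume a (a + c)) (hper : Periodic f c) :
    ∫ s in a..a + c, f' s = 0 := by
  rw [intervalIntegral.integral_eq_sub_of_hasDerivAt (fun s _ ↦ hf s) hf', hper a, sub_self]

theorem integral_mul_deriv_eq_neg_deriv_mul_of_periodic {A : Type*} [NormedRing A]
    [NormedAlgebra ℝ A] [CompleteSpace A] {u v u' v' : ℝ → A}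
    (hu : ∀ s, HasDerivAt u (u' s) s) (hv : ∀ s, HasDerivAt v (v' s) s)
    (hu' : IntervalIntegrable u' volume a (a + c)) (hv' : IntervalIntegrable v' volume a (a + c))
    (hu_per : Periodic u c) (hv_per : Periodic v c) :
    ∫ s in a..a + c, u s * v' s = -∫ s in a..a + c, u' s * v s := by
  rw [intervalIntegral.integral_mul_deriv_eq_deriv_mul (fun s _ ↦ hu s) (fun s _ ↦ hv s) hu' hv',
    hu_per a, hv_per a, sub_self, zero_sub]

end PeriodicIntegration

section KdV

variable {A : Type*} [NormedCommRing A] [NormedAlgebra ℝ A] {κ u v : ℝ → A} {a c : ℝ}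

/-- The KdV operator `Ω D = (1/2) D³ + 2 κ D + κ_s`, where `Ω` is the recursion operator. Composing
with `D` removes the antiderivative `D⁻¹` from `Ω`, so that this is a differential operator. -/
noncomputable def kdvOperator (κ u : ℝ → A) (s : ℝ) : A :=
  (1 / 2 : ℝ) • deriv (deriv (deriv u)) s + 2 * κ s * deriv u s + deriv κ s * u s

/-- The bilinear concomitant of `kdvOperator κ`: the boundary term in its Lagrange identity
`hasDerivAt_kdvConcomitant`. -/
noncomputable def kdvConcomitant (κ u v : ℝ → A) (s : ℝ) : A :=
  (1 / 2 : ℝ) • (deriv (deriv u) s * v s - deriv u s * deriv v s + u s * deriv (deriv v) s)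
    + 2 * (κ s * (u s * v s))

theorem periodic_kdvConcomitant (hκ : Periodic κ c) (hu : Periodic u c) (hv : Periodic v c) :
    Periodic (kdvConcomitant κ u v) c := fun s ↦ by
  simp only [kdvConcomitant, hκ s, hu s, hv s, periodic_deriv hu s, periodic_deriv hv s,
    periodic_deriv (periodic_deriv hu) s, periodic_deriv (periodic_deriv hv) s]

theorem continuous_kdvOperator (hκ : ContDiff ℝ 1 κ) (hu : ContDiff ℝ 3 u) :
    Continuous (kdvOperator κ u) := by
  have hu₁ : ContDiff ℝ 2 (deriv u) := ContDiff.deriv' hu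
  have hκ_cont := hκ.continuous
  have hu_cont := hu.continuous
  have hu₁_cont := hu₁.continuous
  unfold kdvOperator
  fun_prop

theorem hasDerivAt_kdvConcomitant (hκ : Differentiable ℝ κ) (hu : ContDiff ℝ 3 u)
    (hv : ContDiff ℝ 3 v) (s : ℝ) :
    HasDerivAt (kdvConcomitant κ u v) (kdvOperator κ u s * v s + u s * kdvOperator κ v s) s := by
  have hasDerivAts {w : ℝ → A} (hw : ContDiff ℝ 3 w) :
      HasDerivAt w (deriv w s) s ∧ HasDerivAt (deriv w) (deriv (deriv w) s) s ∧
        HasDerivAt (deriv (deriv w)) (deriv (deriv (deriv w)) s) s := by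
    have hw₁ : ContDiff ℝ 2 (deriv w) := ContDiff.deriv' hw
    exact ⟨(hw.differentiable (by norm_num) s).hasDerivAt,
      (hw₁.differentiable (by norm_num) s).hasDerivAt,
      (hw₁.differentiable_deriv_two s).hasDerivAt⟩
  obtain ⟨hu₀, hu₁, hu₂⟩ := hasDerivAts hu
  obtain ⟨hv₀, hv₁, hv₂⟩ := hasDerivAts hv
  refine (((((hu₂.mul hv₀).sub (hu₁.mul hv₁)).add (hu₀.mul hv₂)).const_smul (1 / 2 : ℝ)).add
    (((hκ s).hasDerivAt.mul (hu₀.mul hv₀)).const_mul 2)).congr_deriv ?_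
  simp only [kdvOperator, Pi.mul_apply, Algebra.smul_def]
  ring

variable [CompleteSpace A]

theorem integral_kdvOperator_mul_eq_neg (hκ : ContDiff ℝ 1 κ) (hu : ContDiff ℝ 3 u)
    (hv : ContDiff ℝ 3 v) (hκ_per : Periodic κ c) (hu_per : Periodic u c) (hv_per : Periodic v c) :
    ∫ s in a..a + c, kdvOperator κ u s * v s = -∫ s in a..a + c, u s * kdvOperator κ v s := by
  have hEu_v : IntervalIntegrable (fun s ↦ kdvOperator κ u s * v s) volume a (a + c) :=
    ((continuous_kdvOperator hκ hu).mul hv.continuous).intervalIntegrable _ _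
  have hu_Ev : IntervalIntegrable (fun s ↦ u s * kdvOperator κ v s) volume a (a + c) :=
    (hu.continuous.mul (continuous_kdvOperator hκ hv)).intervalIntegrable _ _
  rw [eq_neg_iff_add_eq_zero, ← intervalIntegral.integral_add hEu_v hu_Ev]
  exact integral_eq_zero_of_hasDerivAt_of_periodic
    (hasDerivAt_kdvConcomitant (hκ.differentiable one_ne_zero) hu hv) (hEu_v.add hu_Ev)
    (periodic_kdvConcomitant hκ_per hu_per hv_per)

theorem periodic_antiderivative_pairing_general {α β g : ℝ → A} (hα : ContDiff ℝ 3 α)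
    (hβ : ContDiff ℝ 3 β) (hκ : ContDiff ℝ 1 κ) (hα_per : Periodic α c) (hβ_per : Periodic β c)
    (hκ_per : Periodic κ c) (hg_per : Periodic g c)
    (hg : ∀ s, HasDerivAt g (kdvOperator κ α s) s) :
    ∫ s in a..a + c, g s * deriv β s = ∫ s in a..a + c, α s * kdvOperator κ β s := by
  have hβ_deriv (s : ℝ) : HasDerivAt β (deriv β s) s :=
    (hβ.differentiable three_ne_zero s).hasDerivAt
  calc ∫ s in a..a + c, g s * deriv β s
      = -∫ s in a..a + c, kdvOperator κ α s * β s :=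
        integral_mul_deriv_eq_neg_deriv_mul_of_periodic hg hβ_deriv
          ((continuous_kdvOperator hκ hα).intervalIntegrable _ _)
          ((hβ.continuous_deriv (by norm_num)).intervalIntegrable _ _) hg_per hβ_per
    _ = ∫ s in a..a + c, α s * kdvOperator κ β s := by
        rw [integral_kdvOperator_mul_eq_neg hκ hα hβ hκ_per hα_per hβ_per, neg_neg]

end KdV

/-- if `g` is a 2π-periodic antiderivative of `Ω α_s`, i.e.
`g_s = (1/2) α_sss + 2 κ α_s + κ_s α`, then
`∫₀^{2π} g β_s ds = ∫₀^{2π} α ((1/2) β_sss + 2 κ β_s + κ_s β) ds`. -/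
theorem periodic_antiderivative_pairing
    (α β κ g : ℝ → ℝ)
    (hα : ContDiff ℝ (⊤ : ℕ∞) α)
    (hβ : ContDiff ℝ (⊤ : ℕ∞) β)
    (hκ : ContDiff ℝ (⊤ : ℕ∞) κ)
    (hg : ContDiff ℝ (⊤ : ℕ∞) g)
    (hαper : ∀ s, α (s + 2 * Real.pi) = α s)
    (hβper : ∀ s, β (s + 2 * Real.pi) = β s)
    (hκper : ∀ s, κ (s + 2 * Real.pi) = κ s)
    (hgper : ∀ s, g (s + 2 * Real.pi) = g s)
    (hgs : ∀ s, deriv g s =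
      (1 / 2) * deriv (deriv (deriv α)) s + 2 * κ s * deriv α s + deriv κ s * α s) :
    ∫ s in (0 : ℝ)..(2 * Real.pi), g s * deriv β s
      = ∫ s in (0 : ℝ)..(2 * Real.pi),
          α s * ((1 / 2) * deriv (deriv (deriv β)) s + 2 * κ s * deriv β s + deriv κ s * β s) := by
  have hg_deriv (s : ℝ) : HasDerivAt g (kdvOperator κ α s) s :=
    (hg.differentiable (by simp) s).hasDerivAt.congr_deriv (hgs s)
  simpa only [kdvOperator, smul_eq_mul, zero_add] using
    periodic_antiderivative_pairing_general (a := 0) (contDiff_infty.1 hα 3)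
      (contDiff_infty.1 hβ 3) (contDiff_infty.1 hκ 1) hαper hβper hκper hgper hg_deriv
end
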